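/- arXiv:1906.08371 — 2 statements merged into one kernel-verified Lean document; each statement's English description precedes it below -/
import Mathlib

section
/- Let H be a fixed non-trivial connected core. An edge gadget for H — a graph F with vertices u*, v* such that (a) for all distinct x, y ∈ V(H) some homomorphism F → H maps u* to x and v* to y, and (b) every homomorphism F → H maps u* and v* to distinct vertices — exists if and only if every subset of V(H) is constructible. -/
/-- A set `C` of vertices of `H` is constructible if there is a graph `K` with
vertices `x₀, x₁, …, x_ℓ` and vertices `y₁, …, y_ℓ` of `H` such that `C` is exactly
the set of possible images of `x₀` under homomorphisms `K → H` mapping each `xᵢ`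
to `yᵢ`. -/
def Constructible {α : Type} (H : SimpleGraph α) (C : Set α) : Prop :=
  ∃ (κ : Type) (K : SimpleGraph κ) (ℓ : ℕ) (x₀ : κ) (x : Fin ℓ → κ) (y : Fin ℓ → α),
    C = {c : α | ∃ f : K →g H, (∀ i, f (x i) = y i) ∧ f x₀ = c}

/-- An edge gadget for `H`: a graph `F` with vertices `u*`, `v*` such that every
pair of distinct vertices of `H` is realizable as `(f u*, f v*)` for some
homomorphism `f : F → H`, and every homomorphism `F → H` separates `u*` and `v*`. -/
def HasEdgeGadget {α : Type} (H : SimpleGraph α) : Prop :=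
  ∃ (φ : Type) (F : SimpleGraph φ) (u v : φ),
    (∀ x y : α, x ≠ y → ∃ f : F →g H, f u = x ∧ f v = y) ∧
    (∀ f : F →g H, f u ≠ f v)

/-!
Both conditions say that every idempotent polymorphism of `H` is conservative, that is, always
returns one of its arguments.

* Constructible sets are the sets closed under the idempotent polymorphisms: homomorphisms from a
  gadget into `H` can be combined by a polymorphism, and conversely the power `H ^ C`, with `x₀`
  the tuple that lists `C` and with the constant tuples pinned, is a universal gadget for `C`.
* If `f` is idempotent and `c = f x` is none of the arguments `x j`, applying `f` to homomorphisms
  from an edge gadget that send `(u*, v*)` to `(x j, c)` gives one sending both to `c`.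
* If idempotent polymorphisms are conservative, they are projections. In a core no neighbourhood
  contains another one, which forces each conservative binary operation to be a projection; so for
  each set `S` of coordinates, `S` or its complement is decisive. A majority-like behaviour on
  three blocks of coordinates is refuted on a triangle of a walk power of `H`, so a single
  coordinate is decisive. Hence the power of `H` indexed by the pairs of distinct vertices is an
  edge gadget: up to an automorphism its homomorphisms to `H` are projections.
-/

open Filter

/-! ### Walks of prescribed length -/

section Walks

variable {α : Type*} {H : SimpleGraph α} {m n k : ℕ} {u v w : α}

/-- There is a walk with exactly `n` edges from `u` to `v`; vertices and edges may repeat. -/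
def HasWalk (H : SimpleGraph α) (n : ℕ) (u v : α) : Prop :=
  ∃ p : H.Walk u v, p.length = n

theorem hasWalk_zero_iff : HasWalk H 0 u v ↔ u = v :=
  SimpleGraph.Walk.exists_length_eq_zero_iff

theorem hasWalk_one_iff : HasWalk H 1 u v ↔ H.Adj u v :=
  SimpleGraph.Walk.exists_length_eq_one_iff

namespace HasWalk

theorem trans (huv : HasWalk H m u v) (hvw : HasWalk H n v w) : HasWalk H (m + n) u w := by
  obtain ⟨p, rfl⟩ := huv
  obtain ⟨q, rfl⟩ := hvw
  exact ⟨p.append q, p.length_append q⟩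

theorem symm (h : HasWalk H n u v) : HasWalk H n v u := by
  obtain ⟨p, rfl⟩ := h
  exact ⟨p.reverse, p.length_reverse⟩

end HasWalk

theorem hasWalk_succ_iff : HasWalk H (n + 1) u v ↔ ∃ w, H.Adj u w ∧ HasWalk H n w v := by
  constructor
  · rintro ⟨_ | ⟨h, p⟩, hp⟩
    · simp at hp
    · exact ⟨_, h, p, by simpa using hp⟩
  · rintro ⟨w, h, p, rfl⟩
    exact ⟨p.cons h, rfl⟩

theorem hasWalk_two_mul_self (h : H.Adj u v) (k : ℕ) : HasWalk H (2 * k) u u := by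
  induction k with
  | zero => exact hasWalk_zero_iff.2 rfl
  | succ k ih => exact ih.trans ((hasWalk_one_iff.2 h).trans (hasWalk_one_iff.2 h.symm))

theorem hasWalk_two_mul_add_one (h : H.Adj u v) (k : ℕ) : HasWalk H (2 * k + 1) u v :=
  (hasWalk_two_mul_self h k).trans (hasWalk_one_iff.2 h)

theorem exists_odd_hasWalk_self (hbip : ¬ H.Colorable 2) :
    ∃ k v, HasWalk H (2 * k + 1) v v := by
  simp only [SimpleGraph.two_colorable_iff_forall_loop_even, not_forall,
    Nat.not_even_iff_odd] at hbip
  obtain ⟨v, p, k, hk⟩ := hbip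
  exact ⟨k, v, p, hk⟩

theorem HasWalk.eventually_self (h : HasWalk H (2 * k + 1) v v) :
    ∀ᶠ n in atTop, HasWalk H n v v := by
  obtain ⟨w, hvw, -⟩ := hasWalk_succ_iff.1 h
  filter_upwards [eventually_ge_atTop (2 * k + 1)] with n hn
  obtain ⟨j, rfl | rfl⟩ := n.even_or_odd'
  · exact hasWalk_two_mul_self hvw j
  · convert h.trans (hasWalk_two_mul_self hvw (j - k)) using 1
    omega

theorem eventually_hasWalk (hconn : H.Preconnected) (hbip : ¬ H.Colorable 2) (u v : α) :
    ∀ᶠ n in atTop, HasWalk H n u v := by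
  obtain ⟨k, o, ho⟩ := exists_odd_hasWalk_self hbip
  obtain ⟨p⟩ := hconn u o
  obtain ⟨q⟩ := hconn o v
  obtain ⟨N, hN⟩ := eventually_atTop.1 ho.eventually_self
  filter_upwards [eventually_ge_atTop (p.length + N + q.length)] with n hn
  convert (HasWalk.trans ⟨p, rfl⟩ (hN (n - p.length - q.length) (by omega))).trans ⟨q, rfl⟩ using 1
  omega

/-- The graph joining the endpoints of the walks of length `k`. Absence of closed walks of length
`k` is what makes it loopless. -/
def walkPower (H : SimpleGraph α) (k : ℕ) (hk : ∀ v, ¬ HasWalk H k v v) : SimpleGraph α where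
  Adj := HasWalk H k
  symm := ⟨fun _ _ h => h.symm⟩
  loopless := ⟨hk⟩

/-- If `k + 2` is the odd girth, then cutting a shortest odd closed walk into pieces of lengths
`k`, `1` and `1` gives the triangle: going back and forth turns an edge into a walk of length
`k`. -/
theorem exists_walkPower_not_cliqueFree_three (hbip : ¬ H.Colorable 2) :
    ∃ k hk, ¬ (walkPower H k hk).CliqueFree 3 := by
  classical
  have hodd := exists_odd_hasWalk_self hbip
  obtain ⟨v, hv⟩ := Nat.find_spec hodd
  have hmin {k : ℕ} := Nat.find_min hodd (m := k)
  generalize Nat.find hodd = m at hv hmin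
  obtain _ | k := m
  · exact absurd (hasWalk_one_iff.1 hv) H.irrefl
  · obtain ⟨u, hvu, hu⟩ := hasWalk_succ_iff.1 hv
    obtain ⟨w, huw, hw⟩ := hasWalk_succ_iff.1 hu
    refine ⟨2 * k + 1, fun z hz => hmin k.lt_succ_self ⟨z, hz⟩, fun hfree => hfree {v, u, w} ?_⟩
    exact SimpleGraph.is3Clique_triple_iff.2
      ⟨hasWalk_two_mul_add_one hvu k, hw.symm, hasWalk_two_mul_add_one huw k⟩

end Walks

/-! ### Cores -/

section Cores

variable {α : Type*} {H : SimpleGraph α}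

/-- No neighbourhood contains the neighbourhood of another vertex. -/
def IsRamified (H : SimpleGraph α) : Prop :=
  ∀ ⦃a b⦄, a ≠ b → ∃ c, H.Adj a c ∧ ¬ H.Adj b c

/-- If the neighbourhood of `a` were contained in that of `b`, then `a` could be folded onto `b`. -/
theorem isRamified_of_forall_injective (hinj : ∀ f : H →g H, Function.Injective f) :
    IsRamified H := by
  classical
  intro a b hab
  by_contra! hsub
  let fold : H →g H :=
    { toFun := Function.update id a b
      map_rel' := by
        intro x y hxy
        obtain rfl | hx := eq_or_ne x a
        · simpa [hxy.ne'] using hsub y hxy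
        obtain rfl | hy := eq_or_ne y a
        · simpa [hx] using (hsub x hxy.symm).symm
        · simpa [hx, hy] using hxy }
  exact hab (hinj fold (by simp [fold, hab.symm]))

theorem IsRamified.not_cliqueFree_two [Nontrivial α] (hram : IsRamified H) :
    ¬ H.CliqueFree 2 := by
  obtain ⟨a, b, hab⟩ := exists_pair_ne α
  obtain ⟨c, hac, -⟩ := hram hab
  rw [SimpleGraph.cliqueFree_two]
  rintro rfl
  exact hac

theorem natCard_le_of_colorable_of_not_cliqueFree {n : ℕ}
    (hinj : ∀ f : H →g H, Function.Injective f) (hcol : H.Colorable n)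
    (hclique : ¬ H.CliqueFree n) : Nat.card α ≤ n := by
  obtain ⟨color⟩ := hcol
  let clique := (SimpleGraph.topEmbeddingOfNotCliqueFree hclique).toHom
  have hcomp : Function.Injective (clique ∘ color) := hinj (clique.comp color)
  simpa using Nat.card_le_card_of_injective color hcomp.of_comp

theorem exists_hom_leftInverse [Finite α] (s : H →g H) (hs : Function.Injective s) :
    ∃ t : H →g H, Function.LeftInverse t s := by
  have hcomp : Function.Injective fun t : H →g H => s.comp t := fun t t' h =>
    RelHom.ext fun a => hs (DFunLike.congr_fun h a)
  obtain ⟨t, ht⟩ := Finite.surjective_of_injective hcomp SimpleGraph.Hom.id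
  exact ⟨t, fun a => hs (DFunLike.congr_fun ht (s a))⟩

end Cores

/-! ### Polymorphisms and constructible sets -/

section Polymorphisms

variable {α ι : Type*} {f : (ι → α) → α} {H : SimpleGraph α}

/-- The operation `f` preserves the binary relation `r`. The polymorphisms of a graph `H` are the
operations preserving `H.Adj`. -/
def Preserves (f : (ι → α) → α) (r : α → α → Prop) : Prop :=
  ∀ ⦃x y : ι → α⦄, (∀ j, r (x j) (y j)) → r (f x) (f y)

/-- The operation `f` returns the common value of equal arguments. -/
def IsIdempotent (f : (ι → α) → α) : Prop :=
  ∀ a, f (fun _ => a) = a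

/-- The operation `f` always returns one of its arguments. -/
def IsConservative (f : (ι → α) → α) : Prop :=
  ∀ x, ∃ j, f x = x j

namespace Preserves

/-- The homomorphism obtained by combining the homomorphisms `q j` with the polymorphism `f`. -/
def combine {κ : Type*} {K : SimpleGraph κ} (hf : Preserves f H.Adj) (q : ι → K →g H) : K →g H where
  toFun t := f fun j => q j t
  map_rel' h := hf fun j => (q j).map_adj h

theorem hasWalk (hf : Preserves f H.Adj) (n : ℕ) : Preserves f (HasWalk H n) := by
  induction n with
  | zero =>
    intro x y h
    exact hasWalk_zero_iff.2 (congrArg f (funext fun j => hasWalk_zero_iff.1 (h j)))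
  | succ n ih =>
    intro x y h
    choose w hxw hwy using fun j => hasWalk_succ_iff.1 (h j)
    exact hasWalk_succ_iff.2 ⟨f w, hf hxw, ih hwy⟩

end Preserves

/-- The categorical (tensor) power of `H`: the homomorphisms from it to `H` are the polymorphisms
of `H`. With no factors it would be a loop. -/
def tensorPower [Nonempty ι] (H : SimpleGraph α) : SimpleGraph (ι → α) where
  Adj x y := ∀ j, H.Adj (x j) (y j)
  symm := ⟨fun _ _ h j => (h j).symm⟩
  loopless := ⟨fun _ h => H.irrefl (h (Classical.arbitrary ι))⟩

/-- The homomorphism from a power of `H` to `H` given by a coordinate. -/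
def tensorPower.proj [Nonempty ι] (H : SimpleGraph α) (i : ι) : tensorPower (ι := ι) H →g H where
  toFun x := x i
  map_rel' h := h i

theorem preserves_of_hom [Nonempty ι] (f : tensorPower (ι := ι) H →g H) : Preserves f H.Adj :=
  fun _ _ h => f.map_adj h

end Polymorphisms

section Constructible

variable {α : Type} {H : SimpleGraph α} {C : Set α}

/-- Every idempotent polymorphism of `H` is conservative. -/
def IdempotentsConservative (H : SimpleGraph α) : Prop :=
  ∀ ⦃ι : Type⦄ (f : (ι → α) → α), Preserves f H.Adj → IsIdempotent f → IsConservative f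

theorem Constructible.apply_mem {ι : Type*} {f : (ι → α) → α} {x : ι → α} (hC : Constructible H C)
    (hf : Preserves f H.Adj) (hid : IsIdempotent f) (hx : ∀ j, x j ∈ C) : f x ∈ C := by
  obtain ⟨κ, K, ℓ, x₀, pin, y, rfl⟩ := hC
  choose q hpin hq using hx
  refine ⟨hf.combine q, fun i => ?_, congrArg f (funext hq)⟩
  change f (fun j => q j (pin i)) = y i
  simp only [hpin, hid (y i)]

theorem idempotentsConservative_of_forall_constructible (hC : ∀ C : Set α, Constructible H C) :
    IdempotentsConservative H := fun _ _ hf hid x =>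
  let ⟨j, hj⟩ := (hC (Set.range x)).apply_mem hf hid Set.mem_range_self
  ⟨j, hj.symm⟩

/-- A complete graph with more vertices than `H` has no homomorphism to `H`. -/
theorem constructible_empty (H : SimpleGraph α) : Constructible H ∅ := by
  refine ⟨Set α, ⊤, 0, ∅, Fin.elim0, Fin.elim0, Eq.symm (Set.eq_empty_of_forall_notMem ?_)⟩
  rintro _ ⟨f, -, -⟩
  exact Function.cantor_injective f f.injective_of_top_hom

theorem constructible_of_forall_apply_mem [Finite α] (hne : C.Nonempty)
    (hC : ∀ f : (C → α) → α, Preserves f H.Adj → IsIdempotent f → f Subtype.val ∈ C) :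
    Constructible H C := by
  have : Nonempty C := hne.to_subtype
  let vertex := (Finite.equivFin α).symm
  refine ⟨C → α, tensorPower H, Nat.card α, Subtype.val, fun i _ => vertex i, vertex,
    Set.Subset.antisymm (fun c hc => ?_) ?_⟩
  · exact ⟨tensorPower.proj H ⟨c, hc⟩, fun _ => rfl, rfl⟩
  · rintro _ ⟨f, hpin, rfl⟩
    exact hC f (preserves_of_hom f) (vertex.forall_congr_right.1 hpin)

theorem IdempotentsConservative.constructible [Finite α] (hH : IdempotentsConservative H)
    (C : Set α) : Constructible H C := by
  obtain rfl | hne := C.eq_empty_or_nonempty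
  · exact constructible_empty H
  · refine constructible_of_forall_apply_mem hne fun f hf hid => ?_
    obtain ⟨j, hj⟩ := hH f hf hid Subtype.val
    exact hj ▸ j.2

theorem HasEdgeGadget.idempotentsConservative (hH : HasEdgeGadget H) :
    IdempotentsConservative H := by
  obtain ⟨φ, F, u, v, hsurj, hsep⟩ := hH
  intro ι f hf hid x
  by_contra! hx
  choose q hqu hqv using fun j => hsurj (x j) (f x) (hx j).symm
  apply hsep (hf.combine q)
  calc f (fun j => q j u) = f x := congrArg f (funext hqu)
    _ = f (fun _ => f x) := (hid (f x)).symm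
    _ = f (fun j => q j v) := congrArg f (funext fun j => (hqv j).symm)

end Constructible

/-! ### Conservative binary operations -/

section Binary

variable {α : Type*} {H : SimpleGraph α} {g : α → α → α}

/-- `g` is a conservative binary polymorphism of `H`, in curried form. -/
structure IsConservativeBinary (H : SimpleGraph α) (g : α → α → α) : Prop where
  map_adj : ∀ ⦃x x' y y'⦄, H.Adj x x' → H.Adj y y' → H.Adj (g x y) (g x' y')
  eq_left_or_eq_right : ∀ x y, g x y = x ∨ g x y = y

namespace IsConservativeBinary

variable {a b c d x y y' : α}

theorem apply_self (hg : IsConservativeBinary H g) (x : α) : g x x = x :=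
  or_self_iff.1 (hg.eq_left_or_eq_right x x)

theorem eq_right (hg : IsConservativeBinary H g) (h : g x y ≠ x) : g x y = y :=
  (hg.eq_left_or_eq_right x y).resolve_left h

theorem ne_of_apply_ne (hg : IsConservativeBinary H g) (h : g x y ≠ x) : x ≠ y := by
  rintro rfl
  exact h (hg.apply_self x)

/-- Otherwise `a`, `b`, `c` form a triangle around which `g` leads to an edge from `c` to itself. -/
theorem eq_left_of_adj_adj (hg : IsConservativeBinary H g) (hab : H.Adj a b) (hbc : H.Adj b c)
    (h : g a b = a) : g b c = b := by
  by_contra hne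
  have hbc_right : g b c = c := hg.eq_right hne
  have hac : H.Adj a c := by simpa only [h, hbc_right] using hg.map_adj hab hbc
  have hca_left : g c a = c := by
    by_contra hca
    have := hg.map_adj hac.symm hab
    rw [hg.eq_right hca, h] at this
    exact H.irrefl this
  have := hg.map_adj hbc hac.symm
  rw [hbc_right, hca_left] at this
  exact H.irrefl this

theorem eq_left_of_adj (hg : IsConservativeBinary H g) (hconn : H.Preconnected)
    (hab : H.Adj a b) (h : g a b = a) : ∀ ⦃u v⦄, H.Adj u v → g u v = u := by
  intro u v huv
  have hbu := (H.reachable_iff_reflTransGen b u).1 (hconn b u)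
  induction hbu generalizing v with
  | refl => exact hg.eq_left_of_adj_adj hab huv h
  | tail _ hwu ih => exact hg.eq_left_of_adj_adj hwu huv (ih hwu)

theorem apply_ne_left_of_adj (hg : IsConservativeBinary H g) (h : g x y ≠ x) (hxc : H.Adj x c)
    (hyd : H.Adj y d) (hcy : ¬ H.Adj c y) : g c d ≠ c := by
  intro hcd
  have := hg.map_adj hxc hyd
  rw [hg.eq_right h, hcd] at this
  exact hcy this.symm

/-- The component of `y` in the subgraph of `H` induced by the vertices `z` with `g x z ≠ x`; it is
meant for `y` that satisfy `g x y ≠ x` themselves. -/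
def deviationComponent (H : SimpleGraph α) (g : α → α → α) (y x : α) : Set α :=
  {z | Relation.ReflTransGen (fun u v => H.Adj u v ∧ g x v ≠ x) y z}

theorem apply_ne_left_of_mem_deviationComponent {z : α} (hy : g x y ≠ x)
    (hz : z ∈ deviationComponent H g y x) : g x z ≠ x := by
  obtain rfl | ⟨_, -, -, h⟩ := Relation.ReflTransGen.cases_tail hz
  exacts [hy, h]

theorem exists_forall_adj_deviationComponent (hg : IsConservativeBinary H g) (hram : IsRamified H)
    (hleft : ∀ ⦃u v⦄, H.Adj u v → g u v = u) (hy : g x y ≠ x) :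
    ∃ c, ∀ z ∈ deviationComponent H g y x, ∀ w, H.Adj z w → g c w ≠ c := by
  obtain ⟨c, hxc, hyc⟩ := hram (hg.ne_of_apply_ne hy)
  have hadj {z w : α} (hz : z ∈ deviationComponent H g y x) (hcz : ¬ H.Adj c z) (hzw : H.Adj z w) :
      g c w ≠ c :=
    hg.apply_ne_left_of_adj (apply_ne_left_of_mem_deviationComponent hy hz) hxc hzw hcz
  have hnadj {z : α} (hz : z ∈ deviationComponent H g y x) : ¬ H.Adj c z := by
    induction hz with
    | refl => exact fun hcy => hyc hcy.symm
    | tail hyz hzw ih => exact fun hcw => hadj hyz ih hzw.1 (hleft hcw)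
  exact ⟨c, fun z hz w hzw => hadj hz (hnadj hz) hzw⟩

/-- An `x` violating this with the largest possible component would have a component closed under
adjacency, hence containing `x` itself. -/
theorem eq_left_or_eq_left_of_adj [Finite α] (hg : IsConservativeBinary H g)
    (hconn : H.Preconnected) (hram : IsRamified H) (hleft : ∀ ⦃u v⦄, H.Adj u v → g u v = u)
    (hyy' : H.Adj y y') (x : α) : g x y = x ∨ g x y' = x := by
  by_contra! hx
  obtain ⟨x, ⟨hy, hy'⟩, hmax⟩ := Set.Finite.exists_maximalFor (deviationComponent H g y)
    {x | g x y ≠ x ∧ g x y' ≠ x} (Set.toFinite _) ⟨x, hx⟩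
  obtain ⟨c, hc⟩ := hg.exists_forall_adj_deviationComponent hram hleft hy
  have hcy : g c y ≠ c := hc y' (.single ⟨hyy', hy'⟩) y hyy'.symm
  have hcy' : g c y' ≠ c := hc y .refl y' hyy'
  have hsub : deviationComponent H g y x ≤ deviationComponent H g y c := by
    intro z hz
    induction hz with
    | refl => exact .refl
    | tail hyu huv ih => exact ih.tail ⟨huv.1, hc _ hyu _ huv.1⟩
  have hall (z : α) : z ∈ deviationComponent H g y x := by
    have hyz := (H.reachable_iff_reflTransGen y z).1 (hconn y z)
    induction hyz with
    | refl => exact .refl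
    | tail _ huv ih => exact hmax ⟨hcy, hcy'⟩ hsub ((hsub ih).tail ⟨huv, hc _ ih _ huv⟩)
  exact apply_ne_left_of_mem_deviationComponent hy (hall x) (hg.apply_self x)

theorem apply_eq_left_of_adj_of_apply_ne (hg : IsConservativeBinary H g)
    (hleft : ∀ ⦃u v⦄, H.Adj u v → g u v = u) (hyy' : H.Adj y y')
    (hdisj : ∀ x, g x y = x ∨ g x y' = x) (hxc : H.Adj x c) (hx : g x y ≠ x) : g c y = c := by
  by_cases hcy : H.Adj c y
  · exact hleft hcy
  · exact (hdisj c).resolve_right (hg.apply_ne_left_of_adj hx hxc hyy' hcy)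

/-- The fold `x ↦ g (g x y) y'` sends the vertices with `g x y ≠ x` to `y` and those with
`g x y' ≠ x` to `y'`. -/
theorem adj_apply_apply (hg : IsConservativeBinary H g)
    (hleft : ∀ ⦃u v⦄, H.Adj u v → g u v = u) (hyy' : H.Adj y y')
    (hdisj : ∀ x, g x y = x ∨ g x y' = x) (hxc : H.Adj x c) :
    H.Adj (g (g x y) y') (g (g c y) y') := by
  have hindep {x c : α} (hxc : H.Adj x c) (hx : g x y ≠ x) : g c y = c :=
    hg.apply_eq_left_of_adj_of_apply_ne hleft hyy' hdisj hxc hx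
  have hindep' {x c : α} (hxc : H.Adj x c) (hx : g x y' ≠ x) : g c y' = c :=
    hg.apply_eq_left_of_adj_of_apply_ne hleft hyy'.symm (fun x => (hdisj x).symm) hxc hx
  have hfix {x c : α} (hxc : H.Adj x c) (hx : g x y ≠ x) :
      H.Adj (g (g x y) y') (g (g c y) y') := by
    rw [hindep hxc hx, hg.eq_right hx, hleft hyy', ← hg.eq_right hx]
    exact hg.map_adj hxc hyy'
  by_cases hx : g x y = x
  case neg => exact hfix hxc hx
  by_cases hc : g c y = c
  case neg => exact (hfix hxc.symm hc).symm
  rw [hx, hc]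
  by_cases hx' : g x y' = x
  · simpa only [hx', hx] using hg.map_adj hxc hyy'
  · simpa only [hindep' hxc hx', hc] using hg.map_adj hxc hyy'.symm

theorem eq_left [Finite α] (hg : IsConservativeBinary H g) (hconn : H.Preconnected)
    (hinj : ∀ f : H →g H, Function.Injective f) (hleft : ∀ ⦃u v⦄, H.Adj u v → g u v = u)
    (x y : α) : g x y = x := by
  by_contra hxy
  have hram := isRamified_of_forall_injective hinj
  obtain ⟨y', hyy', -⟩ := hram (hg.ne_of_apply_ne hxy).symm
  have hdisj := hg.eq_left_or_eq_left_of_adj hconn hram hleft hyy'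
  let fold : H →g H := ⟨fun x => g (g x y) y', hg.adj_apply_apply hleft hyy' hdisj⟩
  refine hg.ne_of_apply_ne hxy (hinj fold ?_)
  change g (g x y) y' = g (g y y) y'
  rw [hg.eq_right hxy, hg.apply_self]

end IsConservativeBinary

end Binary

/-! ### Conservative operations of arbitrary arity -/

section Decisive

variable {α ι : Type*} {f : (ι → α) → α} {H G : SimpleGraph α} {S P Q : Set ι} {i : ι}

open Classical in
/-- The binary operation obtained from `f` by identifying the arguments in `S` with each other and
the arguments outside `S` with each other. -/
noncomputable def binaryMinor (f : (ι → α) → α) (S : Set ι) (a b : α) : α :=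
  f (S.piecewise (fun _ => a) fun _ => b)

/-- The binary minor of `f` at `S` is the first projection; the term is that of social choice
theory. -/
def IsDecisive (f : (ι → α) → α) (S : Set ι) : Prop :=
  ∀ a b, binaryMinor f S a b = a

theorem binaryMinor_compl (S : Set ι) (a b : α) : binaryMinor f Sᶜ a b = binaryMinor f S b a := by
  classical
  exact congrArg f (by convert Set.piecewise_compl S (fun _ : ι => a) fun _ => b)

theorem isConservativeBinary_binaryMinor (hf : Preserves f H.Adj) (hc : IsConservative f)
    (S : Set ι) : IsConservativeBinary H (binaryMinor f S) where
  map_adj x x' y y' hx hy := hf fun j => by by_cases hj : j ∈ S <;> simp [hj, hx, hy]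
  eq_left_or_eq_right x y := by
    classical
    obtain ⟨j, hj⟩ := hc (S.piecewise (fun _ => x) fun _ => y)
    by_cases hjS : j ∈ S
    · exact .inl (by simpa [hjS, binaryMinor] using hj)
    · exact .inr (by simpa [hjS, binaryMinor] using hj)

theorem isDecisive_or_isDecisive_compl [Finite α] (hconn : H.Preconnected)
    (hinj : ∀ f : H →g H, Function.Injective f) (hedge : ¬ H.CliqueFree 2)
    (hf : Preserves f H.Adj) (hc : IsConservative f) (S : Set ι) :
    IsDecisive f S ∨ IsDecisive f Sᶜ := by
  have hminor := isConservativeBinary_binaryMinor hf hc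
  have hdecisive {S : Set ι} {a b : α} (hab : H.Adj a b) (h : binaryMinor f S a b = a) :
      IsDecisive f S :=
    (hminor S).eq_left hconn hinj ((hminor S).eq_left_of_adj hconn hab h)
  obtain ⟨a, b, hab⟩ := SimpleGraph.ne_bot_iff_exists_adj.1 (mt SimpleGraph.cliqueFree_two.2 hedge)
  refine ((hminor S).eq_left_or_eq_right a b).imp (hdecisive hab) fun h => ?_
  exact hdecisive hab.symm ((binaryMinor_compl S b a).trans h)

theorem IsIdempotent.isDecisive_univ (hid : IsIdempotent f) : IsDecisive f Set.univ := fun a b => by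
  simpa [binaryMinor] using hid a

theorem IsIdempotent.not_isDecisive_empty [Nontrivial α] (hid : IsIdempotent f) :
    ¬ IsDecisive f ∅ := by
  obtain ⟨a, b, hab⟩ := exists_pair_ne α
  intro h
  exact hab ((h a b).symm.trans (by simpa [binaryMinor] using hid b))

theorem IsDecisive.apply_ne {x : ι → α} {z w : α} (hS : IsDecisive f S) (hf : Preserves f G.Adj)
    (hz : ∀ j ∈ S, G.Adj (x j) z) (hw : ∀ j ∉ S, G.Adj (x j) w) : f x ≠ z := by
  classical
  intro hxz
  have hadj : G.Adj (f x) (binaryMinor f S z w) := hf fun j => by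
    by_cases hj : j ∈ S
    · simpa [hj] using hz j hj
    · simpa [hj] using hw j hj
  rw [hS, hxz] at hadj
  exact G.irrefl hadj

/-- On a triangle `a`, `b`, `c`, the tuple with value `a` on `P`, `b` on `Q` and `c` elsewhere would
be sent to a vertex other than each of the three. -/
theorem not_isDecisive_union (hG : ¬ G.CliqueFree 3) (hf : Preserves f G.Adj)
    (hc : IsConservative f) (hPQ : Disjoint P Q) (hP : IsDecisive f Pᶜ) (hQ : IsDecisive f Qᶜ) :
    ¬ IsDecisive f (P ∪ Q) := by
  classical
  intro hPuQ
  simp only [SimpleGraph.CliqueFree, not_forall, not_not] at hG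
  obtain ⟨_, htriangle⟩ := hG
  obtain ⟨a, b, c, hab, hac, hbc, -⟩ := SimpleGraph.is3Clique_iff.1 htriangle
  let x : ι → α := P.piecewise (fun _ => a) (Q.piecewise (fun _ => b) fun _ => c)
  have hxP {j : ι} (hj : j ∈ P) : x j = a := by simp [x, hj]
  have hxQ {j : ι} (hj : j ∈ Q) : x j = b := by simp [x, hj, hPQ.notMem_of_mem_right hj]
  have hxR {j : ι} (hjP : j ∉ P) (hjQ : j ∉ Q) : x j = c := by simp [x, hjP, hjQ]
  have hblock (j : ι) : j ∈ P ∨ j ∈ Q ∨ j ∉ P ∧ j ∉ Q := by tauto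
  have hxa : f x ≠ a := hP.apply_ne (w := b) hf
    (fun j hj => by
      by_cases hjQ : j ∈ Q
      · exact hxQ hjQ ▸ hab.symm
      · exact hxR hj hjQ ▸ hac.symm)
    (fun j hj => hxP (Set.notMem_compl_iff.1 hj) ▸ hab)
  have hxb : f x ≠ b := hQ.apply_ne (w := a) hf
    (fun j hj => by
      by_cases hjP : j ∈ P
      · exact hxP hjP ▸ hab
      · exact hxR hjP hj ▸ hbc.symm)
    (fun j hj => hxQ (Set.notMem_compl_iff.1 hj) ▸ hab.symm)
  have hxc : f x ≠ c := hPuQ.apply_ne (w := a) hf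
    (fun j hj => hj.elim (fun hjP => hxP hjP ▸ hac) fun hjQ => hxQ hjQ ▸ hbc)
    (fun j hj => hxR (fun h => hj (.inl h)) (fun h => hj (.inr h)) ▸ hac.symm)
  obtain ⟨j, hj⟩ := hc x
  obtain hjP | hjQ | ⟨hjP, hjQ⟩ := hblock j
  · exact hxa (hj.trans (hxP hjP))
  · exact hxb (hj.trans (hxQ hjQ))
  · exact hxc (hj.trans (hxR hjP hjQ))

theorem exists_isDecisive_singleton [Finite ι] (huniv : IsDecisive f Set.univ)
    (hempty : ¬ IsDecisive f ∅) (hor : ∀ S, IsDecisive f S ∨ IsDecisive f Sᶜ)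
    (hunion : ∀ P Q, Disjoint P Q → IsDecisive f Pᶜ → IsDecisive f Qᶜ → ¬ IsDecisive f (P ∪ Q)) :
    ∃ i, IsDecisive f {i} := by
  by_contra! hsingle
  have hnone (S : Set ι) : ¬ IsDecisive f S := by
    induction S, S.toFinite using Set.Finite.induction_on with
    | empty => exact hempty
    | @insert i S hi _ ih =>
      rw [Set.insert_eq]
      exact hunion {i} S (Set.disjoint_singleton_left.2 hi) ((hor {i}).resolve_left (hsingle i))
        ((hor S).resolve_left ih)
  exact hnone Set.univ huniv

open Classical in
theorem exists_apply_update_ne (hram : IsRamified H) (hf : Preserves f H.Adj) {x y : ι → α}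
    (hx : f x ≠ x i) (hxy : ∀ j ≠ i, H.Adj (x j) (y j)) :
    ∃ c, f (Function.update y i c) ≠ c := by
  obtain ⟨c, hxc, hfc⟩ := hram hx.symm
  refine ⟨c, fun hc => hfc ?_⟩
  have hadj : H.Adj (f x) (f (Function.update y i c)) := hf fun j => by
    obtain rfl | hj := eq_or_ne j i
    · simpa using hxc
    · simpa [hj] using hxy j hj
  rwa [hc] at hadj

open Classical in
theorem exists_apply_update_ne_of_hasWalk (hram : IsRamified H) (hf : Preserves f H.Adj)
    {x y : ι → α} (hx : f x ≠ x i) {n : ℕ} (hxy : ∀ j ≠ i, HasWalk H n (x j) (y j)) :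
    ∃ c, f (Function.update y i c) ≠ c := by
  induction n generalizing x with
  | zero =>
    have hupdate : Function.update y i (x i) = x :=
      Function.update_eq_iff.2 ⟨rfl, fun j hj => (hasWalk_zero_iff.1 (hxy j hj)).symm⟩
    exact ⟨x i, by rwa [hupdate]⟩
  | succ n ih =>
    have : Nonempty α := ⟨x i⟩
    choose! w hxw hwy using fun j hj => hasWalk_succ_iff.1 (hxy j hj)
    obtain ⟨c, hc⟩ := exists_apply_update_ne hram hf hx hxw
    refine ih (x := Function.update w i c) (by simpa using hc) fun j hj => ?_
    simpa [hj] using hwy j hj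

theorem IsDecisive.apply_eq [Finite ι] (hi : IsDecisive f {i}) (hconn : H.Preconnected)
    (hram : IsRamified H) (hbip : ¬ H.Colorable 2) (hf : Preserves f H.Adj) (x : ι → α) :
    f x = x i := by
  classical
  by_contra hx
  obtain ⟨n, hn⟩ := (eventually_all.2 fun j => eventually_hasWalk hconn hbip (x j) (x i)).exists
  obtain ⟨c, hc⟩ := exists_apply_update_ne_of_hasWalk hram hf hx fun j _ => hn j
  apply hc
  simpa [binaryMinor, Set.piecewise_singleton] using hi c (x i)

end Decisive

section Projective

variable {α : Type} {H : SimpleGraph α}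

/-- Every idempotent polymorphism of `H` of finite arity is a projection. -/
def IsProjectiveGraph (H : SimpleGraph α) : Prop :=
  ∀ ⦃ι : Type⦄ [Finite ι] (f : (ι → α) → α), Preserves f H.Adj → IsIdempotent f →
    ∃ i, ∀ x, f x = x i

theorem IdempotentsConservative.isProjectiveGraph [Finite α] [Nontrivial α]
    (hH : IdempotentsConservative H) (hconn : H.Preconnected)
    (hinj : ∀ f : H →g H, Function.Injective f) (hbip : ¬ H.Colorable 2) : IsProjectiveGraph H := by
  intro ι _ f hf hid
  have hc : IsConservative f := hH f hf hid
  have hram := isRamified_of_forall_injective hinj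
  obtain ⟨k, hk, htriangle⟩ := exists_walkPower_not_cliqueFree_three hbip
  obtain ⟨i, hi⟩ := exists_isDecisive_singleton hid.isDecisive_univ hid.not_isDecisive_empty
    (isDecisive_or_isDecisive_compl hconn hinj hram.not_cliqueFree_two hf hc)
    fun _ _ => not_isDecisive_union (G := walkPower H k hk) htriangle (hf.hasWalk k) hc
  exact ⟨i, hi.apply_eq hconn hram hbip hf⟩

/-- Composing with the inverse of the endomorphism `a ↦ f (a, …, a)` makes `f` idempotent. -/
theorem IsProjectiveGraph.exists_forall_apply_eq {ι : Type} [Finite α] [Finite ι] {f : (ι → α) → α}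
    (hH : IsProjectiveGraph H) (hinj : ∀ f : H →g H, Function.Injective f)
    (hf : Preserves f H.Adj) :
    ∃ i, ∀ x y, f x = f y → x i = y i := by
  let diagonal : H →g H := hf.combine fun _ => SimpleGraph.Hom.id
  obtain ⟨t, ht⟩ := exists_hom_leftInverse diagonal (hinj diagonal)
  obtain ⟨i, hi⟩ := hH (fun x => t (f x)) (fun _ _ h => t.map_adj (hf h)) ht
  exact ⟨i, fun x y hxy => by rw [← hi x, ← hi y, hxy]⟩

theorem IsProjectiveGraph.hasEdgeGadget [Finite α] [Nontrivial α] (hH : IsProjectiveGraph H)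
    (hinj : ∀ f : H →g H, Function.Injective f) : HasEdgeGadget H := by
  let ι := {p : α × α // p.1 ≠ p.2}
  obtain ⟨a, b, hab⟩ := exists_pair_ne α
  have : Nonempty ι := ⟨⟨(a, b), hab⟩⟩
  refine ⟨ι → α, tensorPower H, fun p => p.1.1, fun p => p.1.2, fun x y hxy => ?_, fun f hf => ?_⟩
  · exact ⟨tensorPower.proj H ⟨(x, y), hxy⟩, rfl, rfl⟩
  · obtain ⟨i, hi⟩ := hH.exists_forall_apply_eq hinj (preserves_of_hom f)
    exact i.2 (hi _ _ hf)

end Projective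

/-- For a fixed non-trivial connected core `H`, an edge gadget for `H`
exists if and only if every subset of `V(H)` is constructible. -/
theorem edge_gadget_iff_all_constructible {α : Type} [Fintype α] (H : SimpleGraph α)
    (hcard : 3 ≤ Fintype.card α) (hconn : H.Connected)
    (hcore : ∀ f : H →g H, Function.Bijective f) :
    HasEdgeGadget H ↔ ∀ C : Set α, Constructible H C := by
  refine ⟨fun hF => hF.idempotentsConservative.constructible, fun hC => ?_⟩
  have hinj (f : H →g H) : Function.Injective f := (hcore f).injective
  have : Nontrivial α := Fintype.one_lt_card_iff_nontrivial.1 (by omega)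
  have hedge : ¬ H.CliqueFree 2 := (isRamified_of_forall_injective hinj).not_cliqueFree_two
  have hbip : ¬ H.Colorable 2 := fun hcol => by
    have := natCard_le_of_colorable_of_not_cliqueFree hinj hcol hedge
    rw [Nat.card_eq_fintype_card] at this
    omega
  exact ((idempotentsConservative_of_forall_constructible hC).isProjectiveGraph
    hconn.preconnected hinj hbip).hasEdgeGadget hinj
end

section
/- For every finite family of pairwise incomparable non-trivial cores H_0, ..., H_k, there exists a core H_{k+1} incomparable with each H_i; consequently there exist arbitrarily large families of pairwise incomparable cores. (Key step: if og(H) > max_i og(H_i) and χ(H) > max_i χ(H_i), then the core of H is incomparable with every H_i.) -/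
/-! A homomorphism `G →g H` forces `χ(G) ≤ χ(H)` and `og(H) ≤ og(G)`, so a graph exceeding `G`
strictly in both invariants is incomparable with `G`, and so is its core. Hence it suffices to find
finite graphs with both invariants large. Shift graphs serve: colouring a tuple by the set of
colours of its one-step extensions costs one exponential per increase of the tuple length, so their
chromatic number is unbounded for each length, while the position of a fixed entry moves by exactly
one along each edge, so that short closed walks are even. -/

section Homomorphisms

variable {V W : Type*} {G : SimpleGraph V} {H : SimpleGraph W}

/-- A graph is a core if each of its endomorphisms is bijective; for a finite graph this makes each
endomorphism an automorphism. -/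
def IsCore (G : SimpleGraph V) : Prop :=
  ∀ f : G →g G, Function.Bijective f

/-- Two graphs are incomparable if there is no homomorphism between them in either direction. -/
def Incomparable (G : SimpleGraph V) (H : SimpleGraph W) : Prop :=
  IsEmpty (G →g H) ∧ IsEmpty (H →g G)

/-- The odd girth of a graph, with value `⊤` for bipartite graphs. It is encoded through closed
walks instead of cycles, which gives the same value because a shortest odd closed walk is a
cycle. -/
noncomputable def oddGirth (G : SimpleGraph V) : ℕ∞ :=
  ⨅ (v : V) (w : G.Walk v v) (_ : Odd w.length), (w.length : ℕ∞)

theorem Incomparable.symm (h : Incomparable G H) : Incomparable H G :=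
  And.symm h

theorem le_oddGirth_iff {ℓ : ℕ∞} :
    ℓ ≤ oddGirth G ↔ ∀ (v : V) (w : G.Walk v v), Odd w.length → ℓ ≤ w.length := by
  simp only [oddGirth, le_iInf_iff]

theorem oddGirth_le_length {v : V} (w : G.Walk v v) (hw : Odd w.length) :
    oddGirth G ≤ w.length :=
  le_oddGirth_iff.mp le_rfl v w hw

theorem oddGirth_anti_of_hom (f : G →g H) : oddGirth H ≤ oddGirth G := by
  refine le_oddGirth_iff.mpr fun v w hw ↦ ?_
  simpa using oddGirth_le_length (w.map f) (by simpa using hw)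

theorem oddGirth_ne_top_of_not_isBipartite (hG : ¬ G.IsBipartite) : oddGirth G ≠ ⊤ := by
  simp only [SimpleGraph.two_colorable_iff_forall_loop_even, not_forall,
    Nat.not_even_iff_odd] at hG
  obtain ⟨v, w, hw⟩ := hG
  exact ne_top_of_le_ne_top (ENat.natCast_ne_top _) (oddGirth_le_length w hw)

theorem incomparable_of_lt (hog : oddGirth H < oddGirth G)
    (hχ : H.chromaticNumber < G.chromaticNumber) : Incomparable G H :=
  ⟨⟨fun f ↦ hχ.not_ge (SimpleGraph.chromaticNumber_mono_of_hom f)⟩,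
    ⟨fun f ↦ hog.not_ge (oddGirth_anti_of_hom f)⟩⟩

theorem IsCore.of_iso (hG : IsCore G) (e : G ≃g H) : IsCore H := by
  intro f
  have h : Function.Bijective (e.symm ∘ f ∘ e) := hG (e.symm.toHom.comp (f.comp e.toHom))
  rwa [e.symm.bijective.of_comp_iff', e.bijective.of_comp_iff] at h

theorem IsCore.not_isBipartite (hG : IsCore G) (hV : 2 < Nat.card V) : ¬ G.IsBipartite := by
  rintro ⟨c⟩
  suffices hc : Function.Injective c by
    have := Nat.card_le_card_of_injective c hc
    simp only [Nat.card_eq_fintype_card, Fintype.card_fin] at this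
    omega
  by_cases hbot : G = ⊥
  · have : Nonempty V := (Nat.card_pos_iff.mp (by omega)).1
    let const : G →g G := ⟨fun _ ↦ Classical.arbitrary V, by simp [hbot]⟩
    exact fun x y _ ↦ (hG const).injective rfl
  · obtain ⟨g⟩ := (SimpleGraph.not_cliqueFree_iff_top_isContained 2).mp
      (mt SimpleGraph.cliqueFree_two.mp hbot)
    exact Function.Injective.of_comp (f := g) (hG (g.toHom.comp c)).injective

theorem exists_isCore_induce [Finite V] (G : SimpleGraph V) :
    ∃ s : Set V, IsCore (G.induce s) ∧ Nonempty (G →g G.induce s) := by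
  obtain ⟨s, ⟨r⟩, hmin⟩ := exists_minimal_of_wellFoundedLT
    (fun s : Set V ↦ Nonempty (G →g G.induce s)) ⟨Set.univ, ⟨G.induceUnivIso.symm.toHom⟩⟩
  refine ⟨s, fun f ↦ Finite.surjective_iff_bijective.mp fun y ↦ ?_, ⟨r⟩⟩
  let image : Set V := Set.range fun x ↦ (f x : V)
  let toImage : G.induce s →g G.induce image := ⟨fun x ↦ ⟨f x, x, rfl⟩, f.map_rel⟩
  have himage : image ≤ s := Set.range_subset_iff.mpr fun x ↦ (f x).2
  obtain ⟨x, hx⟩ := hmin ⟨toImage.comp r⟩ himage y.2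
  exact ⟨x, Subtype.ext hx⟩

end Homomorphisms

section ShiftGraph

variable {α : Type*} [Preorder α] {k : ℕ}

/-- The shift graph: its vertices are the increasing `k`-tuples, two of them being adjacent if they
are the initial and the final part of an increasing `(k + 1)`-tuple. -/
def shiftGraph (k : ℕ) (α : Type*) [Preorder α] : SimpleGraph (Fin k ↪o α) :=
  SimpleGraph.fromRel fun x y ↦ ∃ z : Fin (k + 1) ↪o α,
    Fin.castSuccOrderEmb.trans z = x ∧ (Fin.succOrderEmb k).trans z = y

theorem shiftGraph_adj_init_tail (z : Fin (k + 2) ↪o α) :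
    (shiftGraph (k + 1) α).Adj
      (Fin.castSuccOrderEmb.trans z) ((Fin.succOrderEmb (k + 1)).trans z) := by
  refine (SimpleGraph.fromRel_adj _ _ _).mpr ⟨fun h ↦ ?_, Or.inl ⟨z, rfl, rfl⟩⟩
  exact zero_ne_one (z.injective (DFunLike.congr_fun h 0))

theorem exists_orderEmbedding_init_tail (x y : Fin (k + 2) ↪o α)
    (h : Fin.castSuccOrderEmb.trans y = (Fin.succOrderEmb (k + 1)).trans x) :
    ∃ z : Fin (k + 3) ↪o α,
      Fin.castSuccOrderEmb.trans z = x ∧ (Fin.succOrderEmb (k + 2)).trans z = y := by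
  have hyx (i : Fin (k + 1)) : y i.castSucc = x i.succ := DFunLike.congr_fun h i
  have hmono : StrictMono (Matrix.vecCons (x 0) y) :=
    strictMono_vecCons.mpr ⟨(x.strictMono (Fin.succ_pos 0)).trans_eq (hyx 0).symm, y.strictMono⟩
  refine ⟨OrderEmbedding.ofStrictMono _ hmono, ?_, rfl⟩
  ext i
  cases i using Fin.cases with
  | zero => rfl
  | succ i => exact hyx i

theorem colorable_shiftGraph_of_succ {r : ℕ}
    (h : (shiftGraph (k + 2) α).Colorable r) : (shiftGraph (k + 1) α).Colorable (2 ^ r) := by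
  obtain ⟨c⟩ := h
  let extensionColors (x : Fin (k + 1) ↪o α) : Set (Fin r) :=
    {a | ∃ y : Fin (k + 2) ↪o α, Fin.castSuccOrderEmb.trans y = x ∧ c y = a}
  have hne (z : Fin (k + 2) ↪o α) : extensionColors (Fin.castSuccOrderEmb.trans z) ≠
      extensionColors ((Fin.succOrderEmb (k + 1)).trans z) := by
    intro heq
    have hz : c z ∈ extensionColors (Fin.castSuccOrderEmb.trans z) := ⟨z, rfl, rfl⟩
    rw [heq] at hz
    obtain ⟨y, hy, hc⟩ := hz
    obtain ⟨w, rfl, rfl⟩ := exists_orderEmbedding_init_tail z y hy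
    exact c.valid (shiftGraph_adj_init_tail w) hc.symm
  have hvalid {x y : Fin (k + 1) ↪o α} (hxy : (shiftGraph (k + 1) α).Adj x y) :
      extensionColors x ≠ extensionColors y := by
    obtain ⟨-, ⟨z, rfl, rfl⟩ | ⟨z, rfl, rfl⟩⟩ := (SimpleGraph.fromRel_adj _ _ _).mp hxy
    exacts [hne z, (hne z).symm]
  simpa using (SimpleGraph.Coloring.mk extensionColors hvalid).colorable

theorem colorable_top_of_shiftGraph_one {β : Type*} [LinearOrder β] {r : ℕ}
    (h : (shiftGraph 1 β).Colorable r) : (⊤ : SimpleGraph β).Colorable r := by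
  let singleton (a : β) : Fin 1 ↪o β :=
    OrderEmbedding.ofStrictMono (fun _ ↦ a) (Subsingleton.strictMono _)
  have hadj {a b : β} (hab : a < b) : (shiftGraph 1 β).Adj (singleton a) (singleton b) := by
    have hmono : StrictMono ![a, b] :=
      strictMono_vecCons.mpr ⟨hab, Subsingleton.strictMono ![b]⟩
    convert shiftGraph_adj_init_tail (OrderEmbedding.ofStrictMono _ hmono) using 1 <;>
      ext i <;> cases Subsingleton.elim i 0 <;> rfl
  let f : (⊤ : SimpleGraph β) →g shiftGraph 1 β :=
    ⟨singleton, fun hne ↦ hne.lt_or_gt.elim hadj fun hgt ↦ (hadj hgt).symm⟩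
  exact h.of_hom f

theorem exists_not_colorable_shiftGraph (k r : ℕ) :
    ∃ N, ¬ (shiftGraph (k + 1) (Fin N)).Colorable r := by
  induction k generalizing r with
  | zero => exact ⟨r + 1, fun h ↦ by
    have hle := (colorable_top_of_shiftGraph_one h).chromaticNumber_le
    rw [SimpleGraph.chromaticNumber_top, Fintype.card_fin, ENat.natCast_le_natCast] at hle
    exact r.lt_succ_self.not_ge hle⟩
  | succ k ih =>
    obtain ⟨N, hN⟩ := ih (2 ^ r)
    exact ⟨N, mt colorable_shiftGraph_of_succ hN⟩

theorem exists_position_of_shiftGraph_adj {x y : Fin k ↪o α}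
    (h : (shiftGraph k α).Adj x y) (p : Fin k) (hp : 0 < (p : ℕ)) (hpk : p + 1 < k) :
    ∃ q : Fin k, y q = x p ∧ ((q : ℕ) = p + 1 ∨ (p : ℕ) = q + 1) := by
  obtain ⟨-, ⟨z, rfl, rfl⟩ | ⟨z, rfl, rfl⟩⟩ := (SimpleGraph.fromRel_adj _ _ _).mp h
  · exact ⟨⟨p - 1, by omega⟩, congrArg z (Fin.ext (Nat.sub_add_cancel hp)),
      Or.inr (Nat.sub_add_cancel hp).symm⟩
  · exact ⟨⟨p + 1, hpk⟩, rfl, Or.inl rfl⟩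

theorem exists_position_of_shiftGraph_walk {x y : Fin k ↪o α}
    (w : (shiftGraph k α).Walk x y) (p : Fin k) (hp : w.length ≤ p) (hpk : p + w.length < k) :
    ∃ q : Fin k, y q = x p ∧ Even (p + q + w.length) := by
  induction w generalizing p with
  | nil => exact ⟨p, rfl, by simp⟩
  | cons h w ih =>
    rw [SimpleGraph.Walk.length_cons] at hp hpk
    obtain ⟨q, hq, hpq⟩ := exists_position_of_shiftGraph_adj h p (by omega) (by omega)
    obtain ⟨s, hs, hqs⟩ := ih q (by omega) (by omega)
    refine ⟨s, hs.trans hq, ?_⟩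
    rw [SimpleGraph.Walk.length_cons]
    grind

theorem le_oddGirth_shiftGraph {ℓ : ℕ} (hk : 2 * ℓ ≤ k + 1) :
    (ℓ : ℕ∞) ≤ oddGirth (shiftGraph k α) := by
  refine le_oddGirth_iff.mpr fun x w hodd ↦ ?_
  by_contra! hlt
  have hlt : w.length < ℓ := by exact_mod_cast hlt
  obtain ⟨q, hq, heven⟩ := exists_position_of_shiftGraph_walk w ⟨w.length, by omega⟩ le_rfl
    (show w.length + w.length < k by omega)
  obtain rfl := x.injective hq
  exact Nat.not_even_iff_odd.mpr hodd ((Nat.even_add.mp heven).mp (Even.add_self _))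

end ShiftGraph

theorem exists_isCore_lt (ℓ r : ℕ) : ∃ (m : ℕ) (K : SimpleGraph (Fin m)),
    IsCore K ∧ oddGirth K ∈ Set.Ioo (ℓ : ℕ∞) ⊤ ∧ (r : ℕ∞) < K.chromaticNumber := by
  obtain ⟨N, hN⟩ := exists_not_colorable_shiftGraph (2 * ℓ) (max 2 r)
  let S := shiftGraph (2 * ℓ + 1) (Fin N)
  obtain ⟨s, hcore, ⟨toCore⟩⟩ := exists_isCore_induce S
  have : Fintype s := Fintype.ofFinite s
  let e := (S.induce s).overFinIso rfl
  have hK : ¬ ((S.induce s).overFin rfl).Colorable (max 2 r) :=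
    fun h ↦ hN (h.of_hom (e.toHom.comp toCore))
  refine ⟨_, _, hcore.of_iso e, ⟨?_, ?_⟩, ?_⟩
  · calc (ℓ : ℕ∞) < (ℓ + 1 : ℕ) := by exact_mod_cast ℓ.lt_succ_self
      _ ≤ oddGirth S := le_oddGirth_shiftGraph (by omega)
      _ ≤ _ := oddGirth_anti_of_hom
        ((SimpleGraph.Embedding.induce s).toHom.comp e.symm.toHom)
  · exact (oddGirth_ne_top_of_not_isBipartite fun h ↦ hK (h.mono (le_max_left 2 r))).lt_top
  · refine lt_of_not_ge fun h ↦ hK ?_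
    exact (SimpleGraph.chromaticNumber_le_iff_colorable.mp h).mono (le_max_right 2 r)

theorem exists_nat_forall_le {ι : Type*} [Finite ι] {f : ι → ℕ∞} (hf : ∀ i, f i ≠ ⊤) :
    ∃ n : ℕ, ∀ i, f i ≤ n := by
  lift f to ι → ℕ using hf
  simpa using Finite.exists_le f

theorem exists_seq_isCore_pairwise_incomparable (ℓ r : ℕ) :
    ∃ K : ℕ → Σ m : ℕ, SimpleGraph (Fin m),
      (∀ j, IsCore (K j).2 ∧ oddGirth (K j).2 ∈ Set.Ioo (ℓ : ℕ∞) ⊤ ∧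
        (r : ℕ∞) < (K j).2.chromaticNumber) ∧
      Pairwise fun j j' ↦ Incomparable (K j).2 (K j').2 := by
  have : Std.Symm fun K K' : Σ m : ℕ, SimpleGraph (Fin m) ↦ Incomparable K.2 K'.2 :=
    ⟨fun _ _ ↦ Incomparable.symm⟩
  refine exists_seq_of_forall_finset_exists'
    (fun K : Σ m : ℕ, SimpleGraph (Fin m) ↦
      IsCore K.2 ∧ oddGirth K.2 ∈ Set.Ioo (ℓ : ℕ∞) ⊤ ∧ (r : ℕ∞) < K.2.chromaticNumber)
    (fun K K' ↦ Incomparable K.2 K'.2) fun s hs ↦ ?_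
  obtain ⟨ℓ', hℓ'⟩ := exists_nat_forall_le fun K : s ↦ (hs K K.2).2.1.2.ne
  obtain ⟨r', hr'⟩ := exists_nat_forall_le fun K : s ↦
    SimpleGraph.chromaticNumber_ne_top_iff_exists.mpr ⟨_, K.1.2.colorable_of_fintype⟩
  obtain ⟨m, K, hcore, ⟨hog, htop⟩, hχ⟩ := exists_isCore_lt (max ℓ ℓ') (max r r')
  rw [Nat.mono_cast.map_max, max_lt_iff] at hog hχ
  exact ⟨⟨m, K⟩, ⟨hcore, ⟨hog.1, htop⟩, hχ.1⟩, fun K' hK' ↦ Incomparable.symm <|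
    incomparable_of_lt ((hℓ' ⟨K', hK'⟩).trans_lt hog.2) ((hr' ⟨K', hK'⟩).trans_lt hχ.2)⟩

theorem exists_incomparable_core_general {ι : Type*} [Finite ι] {V : ι → Type*}
    (H : ∀ i, SimpleGraph (V i)) (hχ : ∀ i, (H i).chromaticNumber ≠ ⊤)
    (hbip : ∀ i, ¬ (H i).IsBipartite) :
    ∃ K : ℕ → Σ m : ℕ, SimpleGraph (Fin m),
      (∀ j, IsCore (K j).2 ∧ ∀ i, Incomparable (K j).2 (H i)) ∧
      Pairwise fun j j' ↦ Incomparable (K j).2 (K j').2 := by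
  obtain ⟨ℓ, hℓ⟩ := exists_nat_forall_le fun i ↦ oddGirth_ne_top_of_not_isBipartite (hbip i)
  obtain ⟨r, hr⟩ := exists_nat_forall_le hχ
  obtain ⟨K, hK, hpair⟩ := exists_seq_isCore_pairwise_incomparable ℓ r
  refine ⟨K, fun j ↦ ?_, hpair⟩
  obtain ⟨hcore, ⟨hog, -⟩, hχK⟩ := hK j
  exact ⟨hcore, fun i ↦ incomparable_of_lt ((hℓ i).trans_lt hog) ((hr i).trans_lt hχK)⟩

/-- For every finite family of pairwise incomparable non-trivial cores
`H 0, …, H k`, there exists a core incomparable with each of them; consequently,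
for every `N` there is a family of `N` pairwise incomparable cores. -/
theorem exists_incomparable_core (k : ℕ) (n : Fin (k + 1) → ℕ)
    (H : ∀ i, SimpleGraph (Fin (n i)))
    (hnontriv : ∀ i, 3 ≤ n i)
    (hcore : ∀ i, ∀ f : H i →g H i, Function.Bijective f)
    (hinc : ∀ i j, i ≠ j → IsEmpty (H i →g H j)) :
    (∃ (m : ℕ) (H' : SimpleGraph (Fin m)),
      (∀ f : H' →g H', Function.Bijective f) ∧
      ∀ i, IsEmpty (H' →g H i) ∧ IsEmpty (H i →g H')) ∧
    (∀ N : ℕ, ∃ (n' : Fin N → ℕ) (K : ∀ j, SimpleGraph (Fin (n' j))),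
      (∀ j, ∀ f : K j →g K j, Function.Bijective f) ∧
      ∀ j j', j ≠ j' → IsEmpty (K j →g K j')) := by
  obtain ⟨K, hK, hpair⟩ := exists_incomparable_core_general H
    (fun i ↦ SimpleGraph.chromaticNumber_ne_top_iff_exists.mpr ⟨_, (H i).colorable_of_fintype⟩)
    (fun i ↦ IsCore.not_isBipartite (hcore i) ((hnontriv i).trans_eq (Nat.card_fin _).symm))
  exact ⟨⟨_, (K 0).2, hK 0⟩, fun N ↦ ⟨fun j ↦ (K j).1, fun j ↦ (K j).2, fun j ↦ (hK j).1,
    fun _ _ hj ↦ (hpair (Fin.val_ne_of_ne hj)).1⟩⟩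
end
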